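/- Let G_n denote the Green's function of the Δ operator on ℤⁿ for n ≥ 3. Then ‖G_n‖_{l^∞(ℤⁿ)} → 0 as n → +∞. -/

import Mathlib

/-!
On `ℤⁿ` the function `b x = 1 / (|x|² + 1)`, with `|x|` the Euclidean norm, satisfies
`Δb ≤ -n δ₀` as soon as `n ≥ 5`: the decay `|x|⁻²` is slower than the decay `|x|^(2 - n)` of a
harmonic function, which leaves room for the discretisation error. Since `Gₙ` vanishes at infinity
and `Δ(-b / n) ≥ ΔGₙ ≥ 0`, the comparison principle squeezes `Gₙ` between `-b / n` and `0`, and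
`b ≤ 1` gives `‖Gₙ‖ ≤ 1 / n`.
-/

open Filter Real

noncomputable section

namespace CS

abbrev Lat (n : ℕ) := Fin n → ℤ

/-- d(x) = ∑ᵢ |xᵢ|, the graph distance to the origin on ℤⁿ. -/
def latDist {n : ℕ} (x : Lat n) : ℕ := ∑ i, (x i).natAbs

/-- x ~ y iff ∑ᵢ |xᵢ − yᵢ| = 1. -/
def adjacent {n : ℕ} (x y : Lat n) : Prop := (∑ i, (x i - y i).natAbs) = 1

instance {n : ℕ} (x y : Lat n) : Decidable (adjacent x y) :=
  decidable_of_iff ((∑ i, (x i - y i).natAbs) = 1) Iff.rfl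

def unitVec {n : ℕ} (i : Fin n) : Lat n := fun j => if j = i then 1 else 0

/-- The graph Laplacian Δu(x) = ∑_{y ~ x} (u(y) − u(x)) on ℤⁿ. -/
def lapl {n : ℕ} (u : Lat n → ℝ) (x : Lat n) : ℝ :=
  ∑ i, (u (x + unitVec i) + u (x - unitVec i) - 2 * u x)

/-- The filter of neighborhoods of infinity (d(x) → +∞) on ℤⁿ. -/
def atInfty (n : ℕ) : Filter (Lat n) := Filter.comap latDist Filter.atTop

/-- The Dirac mass at p. -/
def dirac {n : ℕ} (p x : Lat n) : ℝ := if x = p then 1 else 0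

/-- (u,v) is a topological solution of Δu = λ eᵛ(eᵘ−1) + g, Δv = λ eᵘ(eᵛ−1) + h
with u, v → 0 at infinity. -/
def IsTopSol {n : ℕ} (lam : ℝ) (g h u v : Lat n → ℝ) : Prop :=
  (∀ x, lapl u x = lam * Real.exp (v x) * (Real.exp (u x) - 1) + g x) ∧
  (∀ x, lapl v x = lam * Real.exp (u x) * (Real.exp (v x) - 1) + h x) ∧
  Filter.Tendsto u (atInfty n) (nhds 0) ∧
  Filter.Tendsto v (atInfty n) (nhds 0)

section Comparison

variable {n : ℕ} {u v : Lat n → ℝ} {x : Lat n}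

lemma finite_setOf_latDist_le (R : ℕ) : {x : Lat n | latDist x ≤ R}.Finite := by
  refine (Set.finite_Icc (fun _ => -(R : ℤ)) fun _ => (R : ℤ)).subset fun x hx => ?_
  have hcoord (i : Fin n) : (x i).natAbs ≤ R :=
    (Finset.single_le_sum (fun j _ => Nat.zero_le (x j).natAbs) (Finset.mem_univ i)).trans hx
  exact ⟨fun i => by grind, fun i => by grind⟩

lemma cofinite_le_atInfty : cofinite ≤ atInfty n := by
  refine tendsto_iff_comap.1 (tendsto_atTop.2 fun R => ?_)
  exact (finite_setOf_latDist_le R).subset fun x (hx : ¬R ≤ latDist x) => (not_le.1 hx).le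

lemma lapl_sub (u v : Lat n → ℝ) (x : Lat n) : lapl (u - v) x = lapl u x - lapl v x := by
  simp only [lapl, Pi.sub_apply, ← Finset.sum_sub_distrib]
  exact Finset.sum_congr rfl fun i _ => by ring

lemma lapl_const_smul (c : ℝ) (u : Lat n → ℝ) (x : Lat n) : lapl (c • u) x = c * lapl u x := by
  simp only [lapl, Pi.smul_apply, smul_eq_mul, Finset.mul_sum]
  exact Finset.sum_congr rfl fun i _ => by ring

lemma eq_of_lapl_nonpos_of_forall_le (hu : lapl u x ≤ 0) (hx : ∀ y, u x ≤ u y) (i : Fin n) :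
    u (x + unitVec i) = u x := by
  have hterm (j : Fin n) : 0 ≤ u (x + unitVec j) + u (x - unitVec j) - 2 * u x := by
    linarith [hx (x + unitVec j), hx (x - unitVec j)]
  have hi : u (x + unitVec i) + u (x - unitVec i) - 2 * u x ≤ lapl u x :=
    Finset.single_le_sum (fun j _ => hterm j) (Finset.mem_univ i)
  linarith [hx (x + unitVec i), hx (x - unitVec i)]

lemma eq_add_nsmul_of_forall_le (hu : ∀ y, lapl u y ≤ 0) (hx : ∀ y, u x ≤ u y) (i : Fin n)
    (k : ℕ) : u (x + k • unitVec i) = u x := by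
  induction k with
  | zero => simp
  | succ k ih =>
    rw [succ_nsmul, ← add_assoc,
      eq_of_lapl_nonpos_of_forall_le (hu _) fun y => ih.trans_le (hx y), ih]

lemma injective_add_nsmul_unitVec (x : Lat n) (i : Fin n) :
    Function.Injective fun k : ℕ => x + k • unitVec i := by
  intro k l hkl
  simpa [unitVec] using congrFun hkl i

lemma exists_forall_le_of_finite_setOf_le {α β : Type*} [LinearOrder β] {f : α → β} {a : α}
    (h : {b | f b ≤ f a}.Finite) : ∃ m, f m ≤ f a ∧ ∀ b, f m ≤ f b := by
  obtain ⟨m, hma, hm⟩ := Set.exists_min_image _ f h ⟨a, le_rfl⟩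
  exact ⟨m, hma, fun b => (le_total (f b) (f a)).elim (hm b) hma.trans⟩

/-- A negative value would force a global minimum, whose value would persist along a whole
coordinate ray, that is, all the way to infinity. -/
lemma nonneg_of_lapl_nonpos [NeZero n] (hu : ∀ x, lapl u x ≤ 0)
    (hinf : ∀ c < 0, ∀ᶠ x in cofinite, c < u x) (x : Lat n) : 0 ≤ u x := by
  by_contra! hneg
  have hfin : {y | u y ≤ u x}.Finite := by simpa using eventually_cofinite.1 (hinf (u x) hneg)
  obtain ⟨m, hmx, hmin⟩ := exists_forall_le_of_finite_setOf_le hfin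
  refine Set.infinite_range_of_injective (injective_add_nsmul_unitVec m 0) (hfin.subset ?_)
  rintro _ ⟨k, rfl⟩
  exact (eq_add_nsmul_of_forall_le hu hmin 0 k).trans_le hmx

lemma le_of_lapl_le [NeZero n] (h : ∀ x, lapl u x ≤ lapl v x)
    (hinf : ∀ c < 0, ∀ᶠ x in cofinite, c < u x - v x) (x : Lat n) : v x ≤ u x :=
  sub_nonneg.1 <| nonneg_of_lapl_nonpos (u := u - v)
    (fun y => by rw [lapl_sub]; exact sub_nonpos.2 (h y)) hinf x

end Comparison

section Barrier

variable {n : ℕ} (x : Lat n)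

/-- The squared Euclidean norm `|x|²` of a lattice point. -/
def sqNorm : ℝ := ∑ i, (x i : ℝ) ^ 2

lemma sqNorm_nonneg : 0 ≤ sqNorm x :=
  Finset.sum_nonneg fun _ _ => sq_nonneg _

lemma sq_le_sqNorm (i : Fin n) : (x i : ℝ) ^ 2 ≤ sqNorm x :=
  Finset.single_le_sum (fun j _ => sq_nonneg (x j : ℝ)) (Finset.mem_univ i)

lemma sqNorm_add_unitVec (i : Fin n) : sqNorm (x + unitVec i) = sqNorm x + 2 * x i + 1 := by
  simp [sqNorm, unitVec, add_sq, Finset.sum_add_distrib]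

lemma sqNorm_sub_unitVec (i : Fin n) : sqNorm (x - unitVec i) = sqNorm x - 2 * x i + 1 := by
  simp [sqNorm, unitVec, sub_sq, Finset.sum_add_distrib]

/-- The function `1 / (|x|² + 1)`; divided by `n`, it bounds the Green's function on `ℤⁿ`. -/
def barrier : ℝ := (sqNorm x + 1)⁻¹

lemma barrier_nonneg : 0 ≤ barrier x :=
  inv_nonneg.2 (by linarith [sqNorm_nonneg x])

lemma barrier_le_one : barrier x ≤ 1 :=
  inv_le_one_of_one_le₀ (by linarith [sqNorm_nonneg x])

lemma inv_add_inv_sub_two_mul_inv {K : Type*} [Field K] {s t : K} (hs : s ≠ 0) (hs' : s + 1 ≠ 0)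
    (hadd : s + 2 * t + 1 ≠ 0) (hsub : s - 2 * t + 1 ≠ 0) :
    (s + 2 * t + 1)⁻¹ + (s - 2 * t + 1)⁻¹ - 2 * s⁻¹ =
      2 / (s + 1) * (4 * t ^ 2 / ((s + 2 * t + 1) * (s - 2 * t + 1)) - 1 / s) := by
  field_simp
  ring

lemma barrier_second_difference_le (i : Fin n) :
    barrier (x + unitVec i) + barrier (x - unitVec i) - 2 * barrier x ≤
      2 / (sqNorm x + 2) * (4 * (x i : ℝ) ^ 2 / (sqNorm x ^ 2 + 4) - 1 / (sqNorm x + 1)) := by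
  have hr := sqNorm_nonneg x
  have ht := sq_le_sqNorm x i
  have hadd := sqNorm_nonneg (x + unitVec i)
  have hsub := sqNorm_nonneg (x - unitVec i)
  simp only [barrier, sqNorm_add_unitVec, sqNorm_sub_unitVec] at hadd hsub ⊢
  set r := sqNorm x
  set t := (x i : ℝ)
  -- This lower bound does not depend on `i`, so the numerators can be summed over `i`.
  have hdenom : r ^ 2 + 4 ≤ (r + 1 + 2 * t + 1) * (r + 1 - 2 * t + 1) := by linarith
  calc (r + 2 * t + 1 + 1)⁻¹ + (r - 2 * t + 1 + 1)⁻¹ - 2 * (r + 1)⁻¹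
      = (r + 1 + 2 * t + 1)⁻¹ + (r + 1 - 2 * t + 1)⁻¹ - 2 * (r + 1)⁻¹ := by ring_nf
    _ = 2 / (r + 1 + 1) *
          (4 * t ^ 2 / ((r + 1 + 2 * t + 1) * (r + 1 - 2 * t + 1)) - 1 / (r + 1)) :=
        inv_add_inv_sub_two_mul_inv (by linarith) (by linarith) (by linarith) (by linarith)
    _ ≤ 2 / (r + 1 + 1) * (4 * t ^ 2 / (r ^ 2 + 4) - 1 / (r + 1)) := by gcongr
    _ = 2 / (r + 2) * (4 * t ^ 2 / (r ^ 2 + 4) - 1 / (r + 1)) := by ring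

lemma lapl_barrier_le :
    lapl barrier x ≤
      2 / (sqNorm x + 2) * (4 * sqNorm x / (sqNorm x ^ 2 + 4) - n / (sqNorm x + 1)) :=
  calc lapl barrier x
      ≤ ∑ i, 2 / (sqNorm x + 2) *
          (4 * (x i : ℝ) ^ 2 / (sqNorm x ^ 2 + 4) - 1 / (sqNorm x + 1)) :=
        Finset.sum_le_sum fun i _ => barrier_second_difference_le x i
    _ = 2 / (sqNorm x + 2) * (4 * sqNorm x / (sqNorm x ^ 2 + 4) - n / (sqNorm x + 1)) := by
        rw [← Finset.mul_sum, Finset.sum_sub_distrib, ← Finset.sum_div, ← Finset.mul_sum,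
          ← sqNorm]
        simp [div_eq_mul_inv]

lemma lapl_barrier_zero_le : lapl barrier (0 : Lat n) ≤ -n := by
  simpa [sqNorm] using lapl_barrier_le (0 : Lat n)

lemma lapl_barrier_nonpos (hn : 5 ≤ n) : lapl barrier x ≤ 0 := by
  have hr := sqNorm_nonneg x
  have hn' : (5 : ℝ) ≤ n := mod_cast hn
  have hdecay : 4 * sqNorm x / (sqNorm x ^ 2 + 4) ≤ n / (sqNorm x + 1) := by
    rw [div_le_div_iff₀ (by positivity) (by positivity)]
    calc 4 * sqNorm x * (sqNorm x + 1)
        ≤ 5 * (sqNorm x ^ 2 + 4) := by linarith [sq_nonneg (sqNorm x - 2)]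
      _ ≤ n * (sqNorm x ^ 2 + 4) := by gcongr
  exact (lapl_barrier_le x).trans
    (mul_nonpos_of_nonneg_of_nonpos (by positivity) (sub_nonpos.2 hdecay))

lemma lapl_barrier_le_neg_mul_dirac (hn : 5 ≤ n) : lapl barrier x ≤ -n * dirac 0 x := by
  obtain rfl | hx := eq_or_ne x 0
  · simpa [dirac] using lapl_barrier_zero_le
  · simpa [dirac, hx] using lapl_barrier_nonpos x hn

end Barrier

section Green

variable {n : ℕ} {g : Lat n → ℝ}

lemma nonpos_of_lapl_nonneg [NeZero n] (hg : ∀ x, 0 ≤ lapl g x)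
    (hlim : Tendsto g cofinite (nhds 0)) (x : Lat n) : g x ≤ 0 := by
  refine le_of_lapl_le (u := 0) (fun y => by simpa [lapl] using hg y) (fun c hc => ?_) x
  filter_upwards [hlim.eventually_lt_const (neg_pos.2 hc)] with y hy
  simpa using lt_neg.1 hy

lemma neg_inv_mul_barrier_le (hn : 5 ≤ n) (hg : ∀ x, lapl g x ≤ dirac 0 x)
    (hlim : Tendsto g cofinite (nhds 0)) (x : Lat n) : -(n : ℝ)⁻¹ * barrier x ≤ g x := by
  have : NeZero n := ⟨by lia⟩
  refine le_of_lapl_le (v := -(n : ℝ)⁻¹ • barrier) (fun y => ?_) (fun c hc => ?_) x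
  · rw [lapl_const_smul]
    calc lapl g y
        ≤ dirac 0 y := hg y
      _ = -(n : ℝ)⁻¹ * (-n * dirac 0 y) := by field_simp
      _ ≤ -(n : ℝ)⁻¹ * lapl barrier y :=
          mul_le_mul_of_nonpos_left (lapl_barrier_le_neg_mul_dirac y hn) (by simp)
  · filter_upwards [hlim.eventually_const_lt hc] with y hy
    have hnonneg : 0 ≤ (n : ℝ)⁻¹ * barrier y := mul_nonneg (by positivity) (barrier_nonneg y)
    simpa using hy.trans_le (le_add_of_nonneg_right hnonneg)

lemma abs_le_inv_of_lapl_eq_dirac (hn : 5 ≤ n) (hg : ∀ x, lapl g x = dirac 0 x)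
    (hlim : Tendsto g cofinite (nhds 0)) (x : Lat n) : |g x| ≤ (n : ℝ)⁻¹ := by
  have : NeZero n := ⟨by lia⟩
  have hsubharmonic (y : Lat n) : 0 ≤ lapl g y := by rw [hg, dirac]; positivity
  have hupper : g x ≤ 0 := nonpos_of_lapl_nonneg hsubharmonic hlim x
  rw [abs_of_nonpos hupper]
  calc -g x
      ≤ (n : ℝ)⁻¹ * barrier x := by
        linarith [neg_inv_mul_barrier_le hn (fun y => (hg y).le) hlim x]
    _ ≤ (n : ℝ)⁻¹ := mul_le_of_le_one_right (by positivity) (barrier_le_one x)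

end Green

/-- the l^∞ norm of the Green's function Gₙ of Δ on ℤⁿ tends to 0
as n → +∞ (Gₙ being, for each n ≥ 3, the unique function with ΔGₙ = δ₀ and
Gₙ → 0 at infinity). -/
theorem green_function_sup_norm_tendsto_zero
    (G : (n : ℕ) → Lat n → ℝ)
    (hG : ∀ n : ℕ, 3 ≤ n →
      (∀ x, lapl (G n) x = dirac 0 x) ∧ Filter.Tendsto (G n) (atInfty n) (nhds 0)) :
    Filter.Tendsto (fun n : ℕ => ⨆ x : Lat n, |G n x|) Filter.atTop (nhds 0) := by
  refine squeeze_zero' (.of_forall fun n => Real.iSup_nonneg fun x => abs_nonneg (G n x)) ?_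
    tendsto_inv_atTop_nhds_zero_nat
  filter_upwards [eventually_ge_atTop 5] with n hn
  obtain ⟨hlapl, hlim⟩ := hG n (by lia)
  exact ciSup_le (abs_le_inv_of_lapl_eq_dirac hn hlapl (hlim.mono_left cofinite_le_atInfty))

end CS
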